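/- Let ω = 1/(4 − 4^{1/3}) and set a₁ = ω/2, a₂ = ω, a₃ = (1−3ω)/2, a₄ = (1−3ω)/2, a₅ = ω, a₆ = ω/2 and b₁ = ω, b₂ = ω, b₃ = 1−4ω, b₄ = ω, b₅ = ω, b₆ = 0. Then these coefficients satisfy all the first-, second-, and third-order splitting conditions for p = 6: Σ a_j = Σ b_j = 1, Σ_{j=2}^{6} a_j(Σ_{k<j} b_k) = Σ_{j=1}^{6} b_j(Σ_{k≤j} a_k) = 1/2, and Σ_{j=2}^{6} a_j(Σ_{k<j} b_k)² = Σ_{j=1}^{6} b_j(Σ_{k≤j} a_k)² = 1/3. (These are the coefficients of the fourth-order scheme S_V^{(6)} = T^{ωΔt} T^{ωΔt} T^{(1−4ω)Δt} T^{ωΔt} T^{ωΔt} built from the second-order symmetric operator T^{Δt} = A^{Δt/2} B^{Δt} A^{Δt/2}.) -/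

import Mathlib

/-!
For a composition of the symmetric operators `A^{γ_j Δt/2} B^{γ_j Δt} A^{γ_j Δt/2}`, the partial
sums of the `B`-coefficients are the nodes `t_j = γ₀ + ⋯ + γ_{j-1}`, and those of the
`A`-coefficients are the midpoints between consecutive nodes. The sums over `a` and over `b` in
the order conditions are therefore the trapezoidal and the midpoint rule for `∫ x` and `∫ x²`
over these nodes. Both rules are exact for `x`, and for `x²` their errors are `∑ γ_j³ / 6` and
`-∑ γ_j³ / 12`. So only `∑ γ_j = 1` and `∑ γ_j³ = 0` remain, and for `γ = (ω, ω, 1 - 4ω, ω, ω)`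
the latter says `(4ω - 1)³ = 4ω³`.
-/

section OrderConditions

open Finset

variable {R K : Type*} [CommRing R] [Field K]

/-- The first-, second- and third-order conditions on the coefficients of the splitting scheme
`B^{b_{p-1} Δt} A^{a_{p-1} Δt} ⋯ B^{b₀ Δt} A^{a₀ Δt}`. Stages are numbered from `0`, so the
coefficients called `a_{j+1}` and `b_{j+1}` in the literature are `a j` and `b j`, and the terms
for `j = 0` in `sum_a_mul` and `sum_a_mul_sq` vanish. -/
structure ThirdOrderConditions (p : ℕ) (a b : ℕ → K) : Prop where
  sum_a : ∑ j ∈ range p, a j = 1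
  sum_b : ∑ j ∈ range p, b j = 1
  sum_a_mul : ∑ j ∈ range p, a j * ∑ k ∈ range j, b k = 1 / 2
  sum_b_mul : ∑ j ∈ range p, b j * ∑ k ∈ range (j + 1), a k = 1 / 2
  sum_a_mul_sq : ∑ j ∈ range p, a j * (∑ k ∈ range j, b k) ^ 2 = 1 / 3
  sum_b_mul_sq : ∑ j ∈ range p, b j * (∑ k ∈ range (j + 1), a k) ^ 2 = 1 / 3

/-- The `A`-coefficients of the composition of the operators `A^{γ_j Δt/2} B^{γ_j Δt} A^{γ_j Δt/2}`
over `j = 0, 1, 2, …`, adjacent half steps being merged; the `B`-coefficients are `γ` itself. A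
composition of `s` operators is encoded by a sequence `γ` with `γ j = 0` for `j ≥ s`, which makes
the `A`-coefficient of index `s` the last half step. -/
def strangCoeff (γ : ℕ → K) : ℕ → K
  | 0 => γ 0 / 2
  | j + 1 => (γ j + γ (j + 1)) / 2

/-- The step weights `ω, ω, 1 - 4ω, ω, ω` of Suzuki's five-fold composition `S_V^{(6)}`, continued
by `0` so that they can serve as the `γ` of `strangCoeff`. -/
def suzukiWeight (ω : R) : ℕ → R
  | 0 | 1 | 3 | 4 => ω
  | 2 => 1 - 4 * ω
  | _ => 0

theorem sum_strangCoeff_mul (γ f : ℕ → K) (n : ℕ) :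
    ∑ j ∈ range (n + 1), strangCoeff γ j * f j =
      ∑ j ∈ range n, γ j * ((f j + f (j + 1)) / 2) + γ n / 2 * f n := by
  induction n with
  | zero => simp [strangCoeff]
  | succ n ih =>
    rw [sum_range_succ, ih, sum_range_succ, strangCoeff]
    ring

theorem sum_mul_trapezoid (γ : ℕ → K) (n : ℕ) :
    ∑ j ∈ range n, γ j * ((∑ k ∈ range j, γ k + ∑ k ∈ range (j + 1), γ k) / 2) =
      (∑ j ∈ range n, γ j) ^ 2 / 2 := by
  induction n with
  | zero => simp
  | succ n ih =>
    rw [sum_range_succ, ih, sum_range_succ]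
    ring

theorem sum_suzukiWeight (ω : R) : ∑ j ∈ range 5, suzukiWeight ω j = 1 := by
  simp only [sum_range_succ, sum_range_zero, suzukiWeight]
  ring

theorem sum_suzukiWeight_pow_three (ω : R) :
    ∑ j ∈ range 5, suzukiWeight ω j ^ 3 = 4 * ω ^ 3 + (1 - 4 * ω) ^ 3 := by
  simp only [sum_range_succ, sum_range_zero, suzukiWeight]
  ring

theorem mul_pow_three_add_one_sub_mul_pow_three {x c : K} (hc : c ^ 3 = x) (hcx : c ≠ x) :
    x * (1 / (x - c)) ^ 3 + (1 - x * (1 / (x - c))) ^ 3 = 0 := by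
  have hne : x - c ≠ 0 := sub_ne_zero.mpr hcx.symm
  have hsub : 1 - x * (1 / (x - c)) = -c * (1 / (x - c)) := by
    field_simp
    ring
  rw [hsub, ← hc]
  ring

variable [CharZero K]

theorem sum_range_strangCoeff (γ : ℕ → K) (n : ℕ) :
    ∑ j ∈ range (n + 1), strangCoeff γ j = ∑ j ∈ range n, γ j + γ n / 2 := by
  simpa using sum_strangCoeff_mul γ 1 n

theorem sum_mul_midpoint (γ : ℕ → K) (n : ℕ) :
    ∑ j ∈ range n, γ j * (∑ k ∈ range j, γ k + γ j / 2) = (∑ j ∈ range n, γ j) ^ 2 / 2 := by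
  rw [← sum_mul_trapezoid]
  refine sum_congr rfl fun j _ => ?_
  rw [sum_range_succ]
  ring

theorem sum_mul_trapezoid_sq (γ : ℕ → K) (n : ℕ) :
    ∑ j ∈ range n, γ j * (((∑ k ∈ range j, γ k) ^ 2 + (∑ k ∈ range (j + 1), γ k) ^ 2) / 2) =
      (∑ j ∈ range n, γ j) ^ 3 / 3 + (∑ j ∈ range n, γ j ^ 3) / 6 := by
  induction n with
  | zero => simp
  | succ n ih =>
    rw [sum_range_succ, ih, sum_range_succ, sum_range_succ]
    ring

theorem sum_mul_midpoint_sq (γ : ℕ → K) (n : ℕ) :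
    ∑ j ∈ range n, γ j * (∑ k ∈ range j, γ k + γ j / 2) ^ 2 =
      (∑ j ∈ range n, γ j) ^ 3 / 3 - (∑ j ∈ range n, γ j ^ 3) / 12 := by
  induction n with
  | zero => simp
  | succ n ih =>
    rw [sum_range_succ, ih, sum_range_succ, sum_range_succ]
    ring

theorem thirdOrderConditions_strangCoeff_iff {γ : ℕ → K} {s : ℕ} (hγ : γ s = 0) :
    ThirdOrderConditions (s + 1) (strangCoeff γ) γ ↔
      ∑ j ∈ range s, γ j = 1 ∧ ∑ j ∈ range s, γ j ^ 3 = 0 := by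
  constructor
  · intro h
    have hsum : ∑ j ∈ range s, γ j = 1 := by
      simpa [sum_range_succ, hγ] using h.sum_b
    have htrap := h.sum_a_mul_sq
    rw [sum_strangCoeff_mul γ (fun j => (∑ k ∈ range j, γ k) ^ 2), sum_mul_trapezoid_sq, hsum,
      hγ] at htrap
    exact ⟨hsum, by linear_combination 6 * htrap⟩
  · rintro ⟨hsum, hcubes⟩
    constructor
    · rw [sum_range_strangCoeff, hsum, hγ, zero_div, add_zero]
    · rw [sum_range_succ, hsum, hγ, add_zero]
    · rw [sum_strangCoeff_mul γ (fun j => ∑ k ∈ range j, γ k), sum_mul_trapezoid, hsum, hγ]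
      ring
    · simp only [sum_range_strangCoeff]
      rw [sum_range_succ, sum_mul_midpoint, hsum, hγ]
      ring
    · rw [sum_strangCoeff_mul γ (fun j => (∑ k ∈ range j, γ k) ^ 2), sum_mul_trapezoid_sq, hsum,
        hcubes, hγ]
      ring
    · simp only [sum_range_strangCoeff]
      rw [sum_range_succ, sum_mul_midpoint_sq, hsum, hcubes, hγ]
      ring

theorem thirdOrderConditions_suzukiWeight {ω : K} (hω : 4 * ω ^ 3 + (1 - 4 * ω) ^ 3 = 0) :
    ThirdOrderConditions 6 (strangCoeff (suzukiWeight ω)) (suzukiWeight ω) :=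
  (thirdOrderConditions_strangCoeff_iff rfl).mpr
    ⟨sum_suzukiWeight ω, (sum_suzukiWeight_pow_three ω).trans hω⟩

end OrderConditions

theorem four_rpow_third_pow_three : ((4 : ℝ) ^ ((1 : ℝ) / 3)) ^ 3 = 4 := by
  rw [one_div]
  exact_mod_cast Real.rpow_inv_natCast_pow (n := 3) (by norm_num : (0 : ℝ) ≤ 4) three_ne_zero

theorem four_rpow_third_ne_four : (4 : ℝ) ^ ((1 : ℝ) / 3) ≠ 4 :=
  (Real.rpow_lt_self_of_one_lt (by norm_num) (by norm_num)).ne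

/-- The coefficients of the fourth-order scheme
`S_V^{(6)} = T^{ωΔt} T^{ωΔt} T^{(1−4ω)Δt} T^{ωΔt} T^{ωΔt}` (built from the
second-order symmetric operator `T^{Δt} = A^{Δt/2} B^{Δt} A^{Δt/2}`) with
`ω = 1/(4 − 4^{1/3})` satisfy all the first-, second-, and third-order
splitting conditions for `p = 6`. -/
theorem SV6_satisfies_third_order_conditions :
    let ω : ℝ := 1 / (4 - (4 : ℝ) ^ ((1 : ℝ) / 3))
    let a₁ : ℝ := ω / 2
    let a₂ : ℝ := ω
    let a₃ : ℝ := (1 - 3 * ω) / 2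
    let a₄ : ℝ := (1 - 3 * ω) / 2
    let a₅ : ℝ := ω
    let a₆ : ℝ := ω / 2
    let b₁ : ℝ := ω
    let b₂ : ℝ := ω
    let b₃ : ℝ := 1 - 4 * ω
    let b₄ : ℝ := ω
    let b₅ : ℝ := ω
    let b₆ : ℝ := 0
    (a₁ + a₂ + a₃ + a₄ + a₅ + a₆ = 1 ∧
      b₁ + b₂ + b₃ + b₄ + b₅ + b₆ = 1) ∧
    (a₂ * b₁ + a₃ * (b₁ + b₂) + a₄ * (b₁ + b₂ + b₃) +
        a₅ * (b₁ + b₂ + b₃ + b₄) + a₆ * (b₁ + b₂ + b₃ + b₄ + b₅) = 1 / 2 ∧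
      b₁ * a₁ + b₂ * (a₁ + a₂) + b₃ * (a₁ + a₂ + a₃) +
        b₄ * (a₁ + a₂ + a₃ + a₄) + b₅ * (a₁ + a₂ + a₃ + a₄ + a₅) +
        b₆ * (a₁ + a₂ + a₃ + a₄ + a₅ + a₆) = 1 / 2) ∧
    (a₂ * b₁ ^ 2 + a₃ * (b₁ + b₂) ^ 2 + a₄ * (b₁ + b₂ + b₃) ^ 2 +
        a₅ * (b₁ + b₂ + b₃ + b₄) ^ 2 +
        a₆ * (b₁ + b₂ + b₃ + b₄ + b₅) ^ 2 = 1 / 3 ∧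
      b₁ * a₁ ^ 2 + b₂ * (a₁ + a₂) ^ 2 + b₃ * (a₁ + a₂ + a₃) ^ 2 +
        b₄ * (a₁ + a₂ + a₃ + a₄) ^ 2 +
        b₅ * (a₁ + a₂ + a₃ + a₄ + a₅) ^ 2 +
        b₆ * (a₁ + a₂ + a₃ + a₄ + a₅ + a₆) ^ 2 = 1 / 3) := by
  intro ω
  have h : ThirdOrderConditions 6 (strangCoeff (suzukiWeight ω)) (suzukiWeight ω) :=
    thirdOrderConditions_suzukiWeight <|
      mul_pow_three_add_one_sub_mul_pow_three four_rpow_third_pow_three four_rpow_third_ne_four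
  clear_value ω
  obtain ⟨sum_a, sum_b, sum_a_mul, sum_b_mul, sum_a_mul_sq, sum_b_mul_sq⟩ := h
  simp only [Finset.sum_range_succ, Finset.sum_range_zero, strangCoeff, suzukiWeight]
    at sum_a sum_b sum_a_mul sum_b_mul sum_a_mul_sq sum_b_mul_sq
  exact ⟨⟨by linear_combination sum_a, by linear_combination sum_b⟩,
    ⟨by linear_combination sum_a_mul, by linear_combination sum_b_mul⟩,
    by linear_combination sum_a_mul_sq, by linear_combination sum_b_mul_sq⟩
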